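/- Let R be a commutative ring, G an abelian group, and RG the group ring of G over R; regard R as an RG-module via the augmentation map RG → R sending each element of G to 1. Suppose that every flat R-module has projective dimension at most s over R, and that R has projective dimension at most r as an RG-module. Then every flat RG-module has projective dimension at most s + r over RG. (That is, cot.D(RG) ≤ cot.D(R) + pd_{RG}(R).) -/

import Mathlib

open CategoryTheory

noncomputable section

universe u

/-- The `j`-th Ext group of the `R`-modules `M` and `N`. -/
def extGroup (R : Type u) [CommRing R] (M N : ModuleCat.{u} R) (j : ℕ) : ModuleCat R :=
  ((Ext R (ModuleCat.{u} R) j).obj (Opposite.op M)).obj N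

/-- `Ext_R^j(M, N) = 0`. -/
def ExtVanish (R : Type u) [CommRing R] (M N : ModuleCat.{u} R) (j : ℕ) : Prop :=
  Subsingleton (extGroup R M N j)

/-- The projective dimension of `M` is at most `n`
(via the standard Ext-vanishing characterization). -/
def ProjDimLE (R : Type u) [CommRing R] (M : ModuleCat.{u} R) (n : ℕ) : Prop :=
  ∀ (N : ModuleCat.{u} R) (j : ℕ), n < j → ExtVanish R M N j

/-- `M` has finite projective dimension. -/
def HasFinProjDim (R : Type u) [CommRing R] (M : ModuleCat.{u} R) : Prop :=
  ∃ n, ProjDimLE R M n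

/-- `R` is a coherent ring: every finitely generated ideal is finitely presented. -/
def IsCoherentRing (R : Type u) [CommRing R] : Prop :=
  ∀ I : Ideal R, I.FG → Module.FinitePresentation R I
/-- The augmentation ring homomorphism `RG → R`, sending each element of `G` to `1`. -/
def augmentation (R : Type u) [CommRing R] (G : Type u) [CommGroup G] :
    MonoidAlgebra R G →+* R :=
  ((MonoidAlgebra.lift R R G) 1).toRingHom

theorem extVanish_iff (R : Type u) [CommRing R] (M N : ModuleCat.{u} R) (j : ℕ) :
    ExtVanish R M N (j + 1) ↔ Subsingleton (Abelian.Ext.{u} M N (j + 1)) := by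
  let P := projectiveResolution M
  have h1 : ExtVanish R M N (j + 1) ↔
      ∀ f : P.complex.X (j + 1) ⟶ N, P.complex.d (j + 2) (j + 1) ≫ f = 0 →
        ∃ g : P.complex.X j ⟶ N, P.complex.d (j + 1) j ≫ g = f := by
    unfold ExtVanish extGroup
    rw [← ModuleCat.isZero_iff_subsingleton, (P.isoExt (R := R) (j + 1) N).isZero_iff,
      ← HomologicalComplex.exactAt_iff_isZero_homology,
      HomologicalComplex.exactAt_iff' _ j (j + 1) (j + 2) (by simp) (by simp),
      ShortComplex.moduleCat_exact_iff]
    rfl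
  rw [h1]
  constructor
  · intro h
    refine subsingleton_of_forall_eq 0 fun α => ?_
    obtain ⟨f, hf, rfl⟩ := P.extMk_surjective α (j + 2) rfl
    rw [P.extMk_eq_zero_iff f (j + 2) rfl hf j rfl]
    exact h f hf
  · intro h f hf
    rw [← P.extMk_eq_zero_iff f (j + 2) rfl hf j rfl]
    exact Subsingleton.elim _ _

theorem projDimLE_iff (R : Type u) [CommRing R] (M : ModuleCat.{u} R) (n : ℕ) :
    ProjDimLE R M n ↔ HasProjectiveDimensionLE M n := by
  constructor
  · intro h
    refine HasProjectiveDimensionLT.mk fun i hi N e => ?_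
    obtain ⟨i, rfl⟩ := Nat.exists_eq_succ_of_ne_zero (by omega : i ≠ 0)
    have := (extVanish_iff R M N i).1 (h N (i + 1) (by omega))
    exact Subsingleton.elim _ _
  · intro h N j hj
    obtain ⟨j, rfl⟩ := Nat.exists_eq_succ_of_ne_zero (by omega : j ≠ 0)
    rw [Nat.succ_eq_add_one, extVanish_iff]
    exact HasProjectiveDimensionLT.subsingleton M (n + 1) (j + 1) (by omega) N

section SES
variable {S : Type u} [CommRing S] {K P N : Type u} [AddCommGroup K] [AddCommGroup P]
  [AddCommGroup N] [Module S K] [Module S P] [Module S N]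

theorem ses_aux (f : K →ₗ[S] P) (g : P →ₗ[S] N) (hf : Function.Injective f)
    (hg : Function.Surjective g) (h : Function.Exact f g) :
    ∃ w, (ShortComplex.mk (ModuleCat.ofHom f) (ModuleCat.ofHom g) w).ShortExact := by
  refine ⟨?_, ?_⟩
  · ext x
    exact h.apply_apply_eq_zero x
  · have h1 := (ModuleCat.mono_iff_injective (ModuleCat.ofHom f)).2 hf
    have h2 := (ModuleCat.epi_iff_surjective (ModuleCat.ofHom g)).2 hg
    refine ShortComplex.ShortExact.mk' ?_ h1 h2
    rw [ShortComplex.ShortExact.moduleCat_exact_iff_function_exact]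
    exact h

theorem pd_quot (f : K →ₗ[S] P) (g : P →ₗ[S] N) (hf : Function.Injective f)
    (hg : Function.Surjective g) (h : Function.Exact f g) (n : ℕ)
    (hK : HasProjectiveDimensionLE (ModuleCat.of S K) n)
    (hP : HasProjectiveDimensionLE (ModuleCat.of S P) (n + 1)) :
    HasProjectiveDimensionLE (ModuleCat.of S N) (n + 1) := by
  obtain ⟨w, hw⟩ := ses_aux f g hf hg h
  exact hw.hasProjectiveDimensionLT_X₃ (n + 1) hK hP

theorem pd_ker (f : K →ₗ[S] P) (g : P →ₗ[S] N) (hf : Function.Injective f)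
    (hg : Function.Surjective g) (h : Function.Exact f g) (n : ℕ)
    (hN : HasProjectiveDimensionLE (ModuleCat.of S N) (n + 1))
    (hP : Module.Projective S P) :
    HasProjectiveDimensionLE (ModuleCat.of S K) n := by
  obtain ⟨w, hw⟩ := ses_aux f g hf hg h
  have : Projective (ModuleCat.of S P) := (IsProjective.iff_projective P).1 hP
  exact (hw.hasProjectiveDimensionLT_X₃_iff n this).1 hN

theorem pd_zero_iff : HasProjectiveDimensionLE (ModuleCat.of S N) 0 ↔ Module.Projective S N := by
  rw [← projective_iff_hasProjectiveDimensionLE_zero]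
  exact (IsProjective.iff_projective N).symm

end SES

section Diag

variable (R : Type u) [CommRing R] (G : Type u) [CommGroup G]

/-- The tensor product over `R` of two `RG`-modules, with the diagonal action. -/
abbrev Dg (N M : Type u) [AddCommGroup N] [Module R N] [Module (MonoidAlgebra R G) N]
    [IsScalarTower R (MonoidAlgebra R G) N] [AddCommGroup M] [Module R M]
    [Module (MonoidAlgebra R G) M] [IsScalarTower R (MonoidAlgebra R G) M] : Type u :=
  ((Representation.ofModule' (k := R) (G := G) N).tprod
    (Representation.ofModule' (k := R) (G := G) M)).asModule

theorem exists_cover {M : Type u} [AddCommGroup M] [Module R M]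
    [Module (MonoidAlgebra R G) M] [IsScalarTower R (MonoidAlgebra R G) M] :
    ∃ (F : Type u) (_ : AddCommGroup F) (_ : Module R F) (_ : Module (MonoidAlgebra R G) F)
      (_ : IsScalarTower R (MonoidAlgebra R G) F) (p : F →ₗ[MonoidAlgebra R G] M),
      Function.Surjective p ∧ Module.Projective (MonoidAlgebra R G) F ∧ Module.Projective R F :=
  ⟨M →₀ MonoidAlgebra R G, inferInstance, inferInstance, inferInstance, inferInstance,
    Finsupp.linearCombination _ id, Finsupp.linearCombination_id_surjective _ _,
    inferInstance, inferInstance⟩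

theorem exists_ses {M : Type u} [AddCommGroup M] [Module R M]
    [Module (MonoidAlgebra R G) M] [IsScalarTower R (MonoidAlgebra R G) M] :
    ∃ (F : Type u) (_ : AddCommGroup F) (_ : Module R F) (_ : Module (MonoidAlgebra R G) F)
      (_ : IsScalarTower R (MonoidAlgebra R G) F)
      (K : Type u) (_ : AddCommGroup K) (_ : Module R K) (_ : Module (MonoidAlgebra R G) K)
      (_ : IsScalarTower R (MonoidAlgebra R G) K)
      (i : K →ₗ[MonoidAlgebra R G] F) (p : F →ₗ[MonoidAlgebra R G] M),
      Function.Injective i ∧ Function.Surjective p ∧ Function.Exact i p ∧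
      Module.Projective (MonoidAlgebra R G) F ∧ Module.Projective R F := by
  obtain ⟨F, _, _, _, _, p, hp, hF1, hF2⟩ := exists_cover R G (M := M)
  exact ⟨F, _, _, _, inferInstance, p.ker, inferInstance, inferInstance, inferInstance,
    inferInstance, p.ker.subtype, p, p.ker.subtype_injective, hp, p.exact_subtype_ker_map,
    hF1, hF2⟩

/-- The `R`-linear maps between two `RG`-modules, with the conjugation action. -/
abbrev Hm (N M : Type u) [AddCommGroup N] [Module R N] [Module (MonoidAlgebra R G) N]
    [IsScalarTower R (MonoidAlgebra R G) N] [AddCommGroup M] [Module R M]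
    [Module (MonoidAlgebra R G) M] [IsScalarTower R (MonoidAlgebra R G) M] : Type u :=
  ((Representation.ofModule' (k := R) (G := G) N).linHom
    (Representation.ofModule' (k := R) (G := G) M)).asModule

variable {N M N' M' : Type u} [AddCommGroup N] [Module R N] [Module (MonoidAlgebra R G) N]
    [IsScalarTower R (MonoidAlgebra R G) N] [AddCommGroup M] [Module R M]
    [Module (MonoidAlgebra R G) M] [IsScalarTower R (MonoidAlgebra R G) M]
    [AddCommGroup N'] [Module R N'] [Module (MonoidAlgebra R G) N']
    [IsScalarTower R (MonoidAlgebra R G) N'] [AddCommGroup M'] [Module R M']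
    [Module (MonoidAlgebra R G) M'] [IsScalarTower R (MonoidAlgebra R G) M']

open TensorProduct MonoidAlgebra

/-- The identity map `N ⊗ M → Dg N M`. -/
def Dg.mk : (N ⊗[R] M) ≃ₗ[R] Dg R G N M :=
  (Representation.asModuleEquiv _).symm

/-- The identity map `Hom(N, M) → Hm N M`. -/
def Hm.mk : (N →ₗ[R] M) ≃ₗ[R] Hm R G N M :=
  (Representation.asModuleEquiv _).symm

theorem Dg.single_smul (g : G) (n : N) (m : M) :
    (single g (1 : R)) • Dg.mk R G (n ⊗ₜ[R] m) =
      Dg.mk R G ((single g (1 : R) • n) ⊗ₜ[R] (single g (1 : R) • m)) := by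
  rw [Representation.single_smul, one_smul]
  rfl

theorem Hm.single_smul (g : G) (f : Hm R G N M) (n : N) :
    (Hm.mk R G).symm ((single g (1 : R)) • f) n =
      single g (1 : R) • (Hm.mk R G).symm f (single g⁻¹ (1 : R) • n) := by
  rw [Representation.single_smul, one_smul]
  rfl

/-- An `R`-linear map on the tensor product which is equivariant. -/
def Dg.lin {X : Type u} [AddCommGroup X] [Module R X] [Module (MonoidAlgebra R G) X]
    [IsScalarTower R (MonoidAlgebra R G) X] (f : N ⊗[R] M →ₗ[R] X)
    (h : ∀ (g : G) (n : N) (m : M), f ((single g (1 : R) • n) ⊗ₜ[R] (single g (1 : R) • m)) =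
      single g (1 : R) • f (n ⊗ₜ m)) : Dg R G N M →ₗ[MonoidAlgebra R G] X :=
  MonoidAlgebra.equivariantOfLinearOfComm (f ∘ₗ (Dg.mk R G).symm.toLinearMap) (by
    intro g v
    obtain ⟨v, rfl⟩ := (Dg.mk R G).surjective v
    induction v using TensorProduct.induction_on with
    | zero => simp
    | tmul x y =>
      rw [Dg.single_smul]
      simpa using h g x y
    | add x y hx hy =>
      rw [map_add, smul_add, map_add, hx, hy, map_add, smul_add])

theorem Dg.lin_mk {X : Type u} [AddCommGroup X] [Module R X] [Module (MonoidAlgebra R G) X]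
    [IsScalarTower R (MonoidAlgebra R G) X] (f : N ⊗[R] M →ₗ[R] X) (h) (x) :
    Dg.lin R G f h (Dg.mk R G x) = f x := by
  simp [Dg.lin]

/-- Functoriality of the diagonal tensor product. -/
def Dg.map (f : N →ₗ[MonoidAlgebra R G] N') (h : M →ₗ[MonoidAlgebra R G] M') :
    Dg R G N M →ₗ[MonoidAlgebra R G] Dg R G N' M' :=
  Dg.lin R G ((Dg.mk R G).toLinearMap ∘ₗ
    TensorProduct.map (f.restrictScalars R) (h.restrictScalars R)) (by
    intro g n m
    simp only [LinearMap.comp_apply, LinearEquiv.coe_coe, TensorProduct.map_tmul,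
      LinearMap.coe_restrictScalars, map_smul, Dg.single_smul])

theorem Dg.map_mk (f : N →ₗ[MonoidAlgebra R G] N') (h : M →ₗ[MonoidAlgebra R G] M') (x) :
    Dg.map R G f h (Dg.mk R G x) = Dg.mk R G
      (TensorProduct.map (f.restrictScalars R) (h.restrictScalars R) x) := by
  simp [Dg.map, Dg.lin_mk]

theorem Dg.proj (hN : Module.Projective (MonoidAlgebra R G) N) (hM : Module.Projective R M) :
    Module.Projective (MonoidAlgebra R G) (Dg R G N M) := by
  obtain ⟨F, _, _, _, _, p, hp, hF1, hF2⟩ := exists_cover R G (M := Dg R G N M)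
  -- post-composition with `p`
  let q : Hm R G M F →ₗ[MonoidAlgebra R G] Hm R G M (Dg R G N M) :=
    MonoidAlgebra.equivariantOfLinearOfComm
      ((Hm.mk R G).toLinearMap ∘ₗ (LinearMap.llcomp R M F (Dg R G N M) (p.restrictScalars R)) ∘ₗ
        (Hm.mk R G).symm.toLinearMap) (by
      intro g v
      apply (Hm.mk R G).symm.injective
      ext m
      rw [Hm.single_smul]
      simp only [LinearMap.comp_apply, LinearEquiv.coe_coe, LinearEquiv.symm_apply_apply,
        LinearMap.llcomp_apply, Hm.single_smul, LinearMap.coe_restrictScalars, map_smul])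
  have hq : Function.Surjective q := by
    intro v
    obtain ⟨v, rfl⟩ := (Hm.mk R G).surjective v
    obtain ⟨w, hw⟩ := Module.projective_lifting_property (p.restrictScalars R) v hp
    refine ⟨Hm.mk R G w, ?_⟩
    simp only [q, MonoidAlgebra.equivariantOfLinearOfComm_apply]
    simp [← hw]
    rfl
  let c : N →ₗ[MonoidAlgebra R G] Hm R G M (Dg R G N M) :=
    MonoidAlgebra.equivariantOfLinearOfComm
      ((Hm.mk R G).toLinearMap ∘ₗ
        (LinearMap.llcomp R M (N ⊗[R] M) (Dg R G N M) (Dg.mk R G).toLinearMap) ∘ₗ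
          TensorProduct.mk R N M) (by
      intro g v
      apply (Hm.mk R G).symm.injective
      ext m
      rw [Hm.single_smul]
      simp only [LinearMap.comp_apply, LinearEquiv.coe_coe, LinearEquiv.symm_apply_apply,
        LinearMap.llcomp_apply, TensorProduct.mk_apply, Dg.single_smul, smul_smul,
        MonoidAlgebra.single_mul_single, mul_inv_cancel, mul_one, ← MonoidAlgebra.one_def,
        one_smul])
  obtain ⟨l, hl⟩ := Module.projective_lifting_property q c hq
  let t : N ⊗[R] M →ₗ[R] F := TensorProduct.lift
    ((Hm.mk R G).symm.toLinearMap ∘ₗ l.restrictScalars R)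
  have ht : ∀ (g : G) (n : N) (m : M), t ((single g (1 : R) • n) ⊗ₜ[R] (single g (1 : R) • m)) =
      single g (1 : R) • t (n ⊗ₜ m) := by
    intro g n m
    simp only [t, TensorProduct.lift.tmul, LinearMap.comp_apply, LinearEquiv.coe_coe,
      LinearMap.coe_restrictScalars, map_smul, Hm.single_smul, smul_smul,
      MonoidAlgebra.single_mul_single, inv_mul_cancel, mul_one, ← MonoidAlgebra.one_def,
      one_smul]
  refine Module.Projective.of_split (M := F) (Dg.lin R G t ht) p (LinearMap.ext ?_)
  · intro x
    obtain ⟨x, rfl⟩ := (Dg.mk R G).surjective x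
    rw [LinearMap.comp_apply, Dg.lin_mk, LinearMap.id_apply]
    induction x using TensorProduct.induction_on with
    | zero => simp
    | tmul n m =>
      have h1 := congrArg (fun f => (Hm.mk R G).symm (f n) m) hl
      exact h1
    | add x y hx hy => rw [map_add, map_add, hx, hy, map_add]

theorem flat_of_flat (hN : Module.Flat (MonoidAlgebra R G) N) : Module.Flat R N :=
  Module.Flat.trans R (MonoidAlgebra R G) N

theorem Dg.pd_proj (k : ℕ) (hN : Module.Projective (MonoidAlgebra R G) N)
    (M : Type u) [AddCommGroup M] [Module R M]
    [Module (MonoidAlgebra R G) M] [IsScalarTower R (MonoidAlgebra R G) M]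
    (hM : HasProjectiveDimensionLE (ModuleCat.of R M) k) :
    HasProjectiveDimensionLE (ModuleCat.of (MonoidAlgebra R G) (Dg R G N M)) k := by
  induction k generalizing M with
  | zero =>
    rw [pd_zero_iff] at hM ⊢
    exact Dg.proj R G hN hM
  | succ k ih =>
    obtain ⟨F, _, _, _, _, K, _, _, _, _, i, p, hi, hp, hip, hF1, hF2⟩ := exists_ses R G (M := M)
    have hK := pd_ker (i.restrictScalars R) (p.restrictScalars R) hi hp hip k hM hF2
    have hK' := ih K hK
    have hNf : Module.Flat R N := flat_of_flat R G inferInstance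
    have hDF : Module.Projective (MonoidAlgebra R G) (Dg R G N F) := Dg.proj R G hN hF2
    have hDF' : HasProjectiveDimensionLE (ModuleCat.of (MonoidAlgebra R G) (Dg R G N F)) 0 :=
      pd_zero_iff.2 hDF
    refine pd_quot (Dg.map R G (LinearMap.id (M := N)) i) (Dg.map R G LinearMap.id p) ?_ ?_ ?_ k hK'
      (hasProjectiveDimensionLT_of_ge _ 1 (k + 1 + 1) (by omega))
    · exact Module.Flat.lTensor_preserves_injective_linearMap (M := N) (i.restrictScalars R) hi
    · exact LinearMap.lTensor_surjective N (g := p.restrictScalars R) hp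
    · exact lTensor_exact N (f := i.restrictScalars R) (g := p.restrictScalars R) hip hp

theorem Dg.pd (n s : ℕ) (hMf : Module.Flat R M)
    (hM : HasProjectiveDimensionLE (ModuleCat.of R M) s)
    (N : Type u) [AddCommGroup N] [Module R N]
    [Module (MonoidAlgebra R G) N] [IsScalarTower R (MonoidAlgebra R G) N]
    (hN : HasProjectiveDimensionLE (ModuleCat.of (MonoidAlgebra R G) N) n) :
    HasProjectiveDimensionLE (ModuleCat.of (MonoidAlgebra R G) (Dg R G N M)) (s + n) := by
  induction n generalizing N with
  | zero =>
    rw [pd_zero_iff] at hN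
    exact Dg.pd_proj R G s hN M hM
  | succ k ih =>
    obtain ⟨F, _, _, _, _, K, _, _, _, _, i, p, hi, hp, hip, hF1, hF2⟩ := exists_ses R G (M := N)
    have hK' := ih K (pd_ker i p hi hp hip k hN hF1)
    have hDF' := Dg.pd_proj R G s hF1 M hM
    refine pd_quot (Dg.map R G i (LinearMap.id (M := M))) (Dg.map R G p LinearMap.id)
      ?_ ?_ ?_ (s + k) hK' (hasProjectiveDimensionLT_of_ge _ (s + 1) (s + k + 1 + 1) (by omega))
    · exact Module.Flat.rTensor_preserves_injective_linearMap (M := M) (i.restrictScalars R) hi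
    · exact LinearMap.rTensor_surjective M (g := p.restrictScalars R) hp
    · exact rTensor_exact M (f := i.restrictScalars R) (g := p.restrictScalars R) hip hp

end Diag


theorem stmt9 (R : Type u) [CommRing R] (G : Type u) [CommGroup G] (s r : ℕ)
    (hR : ∀ (F : ModuleCat.{u} R), Module.Flat R F → ProjDimLE R F s)
    (hr : letI : Module (MonoidAlgebra R G) R := Module.compHom R (augmentation R G)
      ProjDimLE (MonoidAlgebra R G) (ModuleCat.of (MonoidAlgebra R G) R) r) :
    ∀ (F : ModuleCat.{u} (MonoidAlgebra R G)), Module.Flat (MonoidAlgebra R G) F →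
      ProjDimLE (MonoidAlgebra R G) F (s + r) := by
  intro F hF
  let : Module (MonoidAlgebra R G) R := Module.compHom R (augmentation R G)
  let : Module R F := Module.compHom F (algebraMap R (MonoidAlgebra R G))
  have hsm (a : MonoidAlgebra R G) (x : R) : a • x = augmentation R G a * x := rfl
  have haug (g : G) : augmentation R G (MonoidAlgebra.single g 1) = 1 := by
    simp [augmentation]
  have : IsScalarTower R (MonoidAlgebra R G) R := ⟨fun x y z => by
    rw [hsm, hsm, smul_eq_mul, ← mul_assoc]
    congr 1
    simp [augmentation]⟩
  have : IsScalarTower R (MonoidAlgebra R G) F := ⟨fun x y z => by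
    change _ = algebraMap R (MonoidAlgebra R G) x • y • z
    rw [smul_smul, Algebra.smul_def]⟩
  have hFf : Module.Flat R F := flat_of_flat R G hF
  have h1 := (projDimLE_iff _ _ _).1 (hR (ModuleCat.of R F) hFf)
  have h2 := Dg.pd R G r s hFf h1 R ((projDimLE_iff _ _ _).1 hr)
  rw [projDimLE_iff]
  let e : Dg R G R F →ₗ[MonoidAlgebra R G] F :=
    Dg.lin R G (TensorProduct.lid R F).toLinearMap (by
      intro g n m
      simp only [LinearEquiv.coe_coe, TensorProduct.lid_tmul, hsm, haug, one_mul]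
      exact smul_comm _ _ _)
  have he : Function.Bijective e := (TensorProduct.lid R F).bijective
  exact ModuleCat.hasProjectiveDimensionLE_of_linearEquiv (M := ModuleCat.of _ (Dg R G R F))
    (N := F) (LinearEquiv.ofBijective e he) (s + r)

end
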